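/- Let F be a strongly proper filter on a relativized Boolean algebra RB and let X ∉ F. Then F can be extended to a filter u ∈ F^RB such that π₂(F) = π₂(u) and X ∉ u. -/

import Mathlib

/-!
Sorting elements by the value of `1_X` splits the relativized Boolean algebra into the fibres
`π₁(X)`, on which `∧`, `∨`, `¬` act as Boolean operations. Since `1_X = 1 ∨ X`, distributivity gives
`1_{X ∧ Y} = 1_X ∧ 1_Y` (`one_meet`), and by (rb5) the restriction `Y ↦ Y ∧ 1_X` from the fibre of a
larger `1_Y` to the fibre of `1_X` commutes with complements.

The main step is `adjoin_mem`: if `F` is a strongly proper filter with `1_A ∈ F` and `A ∉ F`, then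
the filter generated by `F` and `¬A` is again strongly proper and contains no new element `1_Z`.
Indeed, if `f ∧ ¬A` lies below some `0_Z`, it is the bottom of its fibre, and
then `f ∧ 1_A ≤ A` there, which forces `A ∈ F` (`le_of_meet_compl_le_zero`).

Take a filter `u` maximal, by Zorn's lemma, among the strongly proper filters extending `F` with
`π₂(u) ⊆ F`. The main step shows that `u` decides every `A` with `1_A ∈ u`, which makes each
`u ∩ π₁(Y)` an ultrafilter. To keep `X` out of `u`, adjoin `¬X` first if `1_X ∈ F`; if
`1_X ∉ F`, then `X ∈ u` is impossible since it would put `1_X` into `π₂(u)`.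
-/

structure RBA (α : Type*) where
  meet : α → α → α
  join : α → α → α
  compl : α → α
  bot : α
  top : α
  meet_assoc : ∀ x y z, meet (meet x y) z = meet x (meet y z)
  meet_comm : ∀ x y, meet x y = meet y x
  join_assoc : ∀ x y z, join (join x y) z = join x (join y z)
  join_comm : ∀ x y, join x y = join y x
  meet_distrib : ∀ x y z, meet x (join y z) = join (meet x y) (meet x z)
  join_distrib : ∀ x y z, join x (meet y z) = meet (join x y) (join x z)
  demorgan_meet : ∀ x y, compl (meet x y) = join (compl x) (compl y)
  demorgan_join : ∀ x y, compl (join x y) = meet (compl x) (compl y)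
  meet_idem : ∀ x, meet x x = x
  join_idem : ∀ x, join x x = x
  meet_top : ∀ x, meet x top = x
  compl_compl : ∀ x, compl (compl x) = x
  join_top : ∀ x, join x top = join x (compl x)
  meet_bot : ∀ x, meet x bot = bot
  rb5 : ∀ x y,
    meet (join x (compl x)) (join y (compl y)) = join x (compl x) →
    compl (meet y (join x (compl x))) = meet (compl y) (join x (compl x))

namespace RBA
variable {α : Type*}

/-- `1_X := X ∨ ¬X` -/
def one (R : RBA α) (x : α) : α := R.join x (R.compl x)

/-- `0_X := X ∧ ¬X` -/
def zero (R : RBA α) (x : α) : α := R.meet x (R.compl x)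

/-- `ge R y x` means `y ≥ x`, i.e. `x ∧ y = x`. -/
def ge (R : RBA α) (y x : α) : Prop := R.meet x y = x

end RBA

namespace RBA
variable {α : Type*}

/-- A filter on an RBA: contains `1`, upward closed under `≥`, closed under `∧`. -/
def IsFilter (R : RBA α) (u : Set α) : Prop :=
  R.top ∈ u ∧ (∀ x y, x ∈ u → R.ge y x → y ∈ u) ∧
    (∀ x y, x ∈ u → y ∈ u → R.meet x y ∈ u)

/-- A strongly proper set: contains no element of the form `X ∧ ¬X`. -/
def StronglyProper (R : RBA α) (u : Set α) : Prop := ∀ x, R.zero x ∉ u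

/-- `π₁(X) := {Z : 1_Z = 1_X}`. -/
def pi1 (R : RBA α) (x : α) : Set α := {z | R.one z = R.one x}

/-- `π₂(u) := {1_X : X ∈ RB} ∩ u`. -/
def pi2 (R : RBA α) (u : Set α) : Set α := {z | z ∈ u ∧ ∃ x, z = R.one x}

/-- A filter of the Boolean algebra `π₁(X)` (top element `1_X`). -/
def IsFilterOn (R : RBA α) (x : α) (w : Set α) : Prop :=
  w ⊆ R.pi1 x ∧ R.one x ∈ w ∧
    (∀ a b, a ∈ w → b ∈ R.pi1 x → R.ge b a → b ∈ w) ∧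
    (∀ a b, a ∈ w → b ∈ w → R.meet a b ∈ w)

/-- An ultrafilter of the Boolean algebra `π₁(X)`: a strongly proper filter of `π₁(X)`
maximal among strongly proper filters of `π₁(X)`. -/
def IsUltraOn (R : RBA α) (x : α) (w : Set α) : Prop :=
  R.IsFilterOn x w ∧ (∀ a ∈ R.pi1 x, R.zero a ∉ w) ∧
    ∀ v, R.IsFilterOn x v → (∀ a ∈ R.pi1 x, R.zero a ∉ v) → w ⊆ v → w = v

/-- `F^RB`: filters `u` such that for every `X` with `1_X ∈ u`,
`u ∩ π₁(X)` is an ultrafilter of the Boolean algebra `π₁(X)`. -/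
def FRB (R : RBA α) : Set (Set α) :=
  {u | R.IsFilter u ∧ ∀ x, R.one x ∈ u → R.IsUltraOn x (u ∩ R.pi1 x)}

end RBA

namespace RBA
variable {α : Type*} (R : RBA α)

instance : Std.Associative R.meet := ⟨R.meet_assoc⟩
instance : Std.Commutative R.meet := ⟨R.meet_comm⟩

lemma one_eq (x : α) : R.one x = R.join R.top x := by
  rw [one, ← R.join_top, R.join_comm]

lemma one_meet (x y : α) : R.one (R.meet x y) = R.meet (R.one x) (R.one y) := by
  simp only [one_eq, R.join_distrib]

lemma one_compl (x : α) : R.one (R.compl x) = R.one x := by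
  rw [one, one, R.compl_compl, R.join_comm]

/-- The failure of absorption is symmetric in `∧` and `∨`. -/
lemma join_meet_self (x y : α) : R.join x (R.meet x y) = R.meet x (R.join x y) := by
  rw [R.join_distrib, R.join_idem]

lemma meet_one (x : α) : R.meet x (R.one x) = x := by
  rw [one, ← R.join_top, ← join_meet_self, R.meet_top, R.join_idem]

lemma zero_eq (x : α) : R.zero x = R.compl (R.one x) := by
  rw [zero, one, R.demorgan_join, R.compl_compl, R.meet_comm]

lemma one_one (x : α) : R.one (R.one x) = R.one x := by
  rw [R.one_eq (R.one x), R.one_eq x, ← R.join_assoc, R.join_idem]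

lemma one_zero (x : α) : R.one (R.zero x) = R.one x := by
  rw [zero, one_meet, one_compl, R.meet_idem]

/-- `0_X` is neutral for `∨` in the fibre of `X`. -/
lemma join_zero (x : α) : R.join x (R.zero x) = x := by
  rw [zero, join_meet_self, ← one, meet_one]

lemma meet_zero (x : α) : R.meet x (R.zero x) = R.zero x := by
  rw [zero, ← R.meet_assoc, R.meet_idem]

lemma one_mono {x y : α} (h : R.ge y x) : R.ge (R.one y) (R.one x) := by
  unfold ge at *
  rw [← one_meet, h]

lemma ge_trans {x y z : α} (h1 : R.ge z y) (h2 : R.ge y x) : R.ge z x := by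
  unfold ge at *
  rw [← h2, R.meet_assoc, h1]

lemma ge_one (x : α) : R.ge (R.one x) x := R.meet_one x

lemma meet_ge_left (x y : α) : R.ge x (R.meet x y) := by
  rw [ge, R.meet_comm, ← R.meet_assoc, R.meet_idem]

lemma meet_ge_right (x y : α) : R.ge y (R.meet x y) := by
  rw [ge, R.meet_assoc, R.meet_idem]

/-- An element below some `0_Z` is the bottom of its own fibre. -/
lemma eq_zero_of_le_zero {k z : α} (h : R.ge (R.zero z) k) : k = R.zero k := by
  have h1 : R.ge (R.one z) (R.one k) := by
    have := R.one_mono h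
    rwa [one_zero] at this
  -- the restriction of `z` to the fibre of `k` has bottom `0_Z ∧ 1_k`
  have h2 : R.compl (R.meet z (R.one k)) = R.meet (R.compl z) (R.one k) := R.rb5 k z h1
  have h3 : R.zero (R.meet z (R.one k)) = R.zero k := by
    rw [zero_eq, one_meet, one_one, R.meet_comm, h1, ← zero_eq]
  have h4 : R.zero (R.meet z (R.one k)) = R.meet (R.zero z) (R.one k) := by
    rw [zero, h2, zero]
    have : R.meet (R.meet z (R.one k)) (R.meet (R.compl z) (R.one k))
      = R.meet (R.meet z (R.compl z)) (R.meet (R.one k) (R.one k)) := by ac_rfl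
    rw [this, R.meet_idem]
  calc k = R.meet k (R.meet (R.zero z) (R.one k)) := by
        rw [← R.meet_assoc, h, meet_one]
    _ = R.zero k := by rw [← h4, h3, meet_zero]

/-- If `f ∧ ¬A` is the bottom of its fibre, then `f` restricted to `1_A` lies below `A`. -/
lemma le_of_meet_compl_le_zero {f a z : α} (h : R.ge (R.zero z) (R.meet f (R.compl a))) :
    R.ge a (R.meet f (R.one a)) := by
  have hk := R.eq_zero_of_le_zero h
  have e1 : R.meet f (R.one a) = R.join (R.meet f a) (R.meet f (R.compl a)) := by
    rw [one, R.meet_distrib]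
  have e2 : R.zero (R.meet f (R.compl a)) = R.zero (R.meet f a) := by
    rw [zero_eq, zero_eq, one_meet, one_meet, one_compl]
  have e3 : R.meet f (R.one a) = R.meet f a := by
    rw [e1, hk, e2, join_zero]
  rw [e3]
  exact R.meet_ge_right f a

/-- The filter generated by a filter `F` together with `¬a`. -/
def adjoin (F : Set α) (a : α) : Set α := {z | ∃ f ∈ F, R.ge z (R.meet f (R.compl a))}

/-- Admissible extensions of `F`: strongly proper filters whose elements of the
form `1_X` all lie in `F`. -/
def Adm (F : Set α) (u : Set α) : Prop :=
  R.IsFilter u ∧ R.StronglyProper u ∧ ∀ x, R.one x ∈ u → R.one x ∈ F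

variable {R}

lemma subset_adjoin (F : Set α) (a : α) : F ⊆ R.adjoin F a :=
  fun f hf => ⟨f, hf, R.meet_ge_left _ _⟩

lemma compl_mem_adjoin {F : Set α} (hF : R.IsFilter F) (a : α) : R.compl a ∈ R.adjoin F a :=
  ⟨R.top, hF.1, R.meet_ge_right _ _⟩

lemma adjoin_mem {F u : Set α} (hu : R.Adm F u) {a : α} (h1 : R.one a ∈ u) (ha : a ∉ u) :
    R.Adm F (R.adjoin u a) := by
  obtain ⟨⟨htop, hup, hmeet⟩, -, hone⟩ := hu
  refine ⟨⟨subset_adjoin u a htop, ?_, ?_⟩, ?_, ?_⟩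
  · rintro x y ⟨f, hf, hx⟩ hy
    exact ⟨f, hf, R.ge_trans hy hx⟩
  · rintro x y ⟨f, hf, hx⟩ ⟨g, hg, hy⟩
    refine ⟨R.meet f g, hmeet _ _ hf hg, ?_⟩
    unfold ge at *
    have : R.meet (R.meet f g) (R.compl a)
        = R.meet (R.meet f (R.compl a)) (R.meet g (R.compl a)) := by
      conv_lhs => rw [← R.meet_idem (R.compl a)]
      ac_rfl
    rw [this]
    conv_rhs => rw [← hx, ← hy]
    ac_rfl
  · rintro z ⟨f, hf, hz⟩
    exact ha (hup _ _ (hmeet _ _ hf h1) (R.le_of_meet_compl_le_zero hz))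
  · rintro x ⟨f, hf, hx⟩
    apply hone
    have := R.one_mono hx
    rw [one_one, one_meet, one_compl] at this
    exact hup _ _ (hmeet _ _ (hup _ _ hf (R.ge_one f)) h1) this

/-- Every admissible extension is contained in a maximal one. -/
lemma exists_maximal {F G : Set α} (hG : R.Adm F G) :
    ∃ u, G ⊆ u ∧ Maximal (R.Adm F) u := by
  refine zorn_subset_nonempty {u | R.Adm F u} ?_ G hG
  intro c hc hchain ⟨v, hv⟩
  refine ⟨⋃₀ c, ⟨⟨⟨v, hv, (hc hv).1.1⟩, ?_, ?_⟩, ?_, ?_⟩, fun s hs => Set.subset_sUnion_of_mem hs⟩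
  · rintro x y ⟨s, hs, hx⟩ hy
    exact ⟨s, hs, (hc hs).1.2.1 x y hx hy⟩
  · rintro x y ⟨s, hs, hx⟩ ⟨t, ht, hy⟩
    rcases hchain.total hs ht with h | h
    · exact ⟨t, ht, (hc ht).1.2.2 x y (h hx) hy⟩
    · exact ⟨s, hs, (hc hs).1.2.2 x y hx (h hy)⟩
  · rintro x ⟨s, hs, hx⟩
    exact (hc hs).2.1 x hx
  · rintro x ⟨s, hs, hx⟩
    exact (hc hs).2.2 x hx

lemma maximal_mem_FRB {F u : Set α} (hu : Maximal (R.Adm F) u) : u ∈ R.FRB := by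
  obtain ⟨⟨htop, hup, hmeet⟩, hsp, -⟩ := hu.prop
  refine ⟨hu.prop.1, fun x hx => ⟨⟨Set.inter_subset_right, ⟨hx, R.one_one x⟩, ?_, ?_⟩, ?_, ?_⟩⟩
  · rintro a b ⟨ha, -⟩ hb hab
    exact ⟨hup a b ha hab, hb⟩
  · rintro a b ⟨ha, ha'⟩ ⟨hb, hb'⟩
    refine ⟨hmeet a b ha hb, ?_⟩
    change R.one a = R.one x at ha'
    change R.one b = R.one x at hb'
    change R.one (R.meet a b) = R.one x
    rw [one_meet, ha', hb', R.meet_idem]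
  · rintro a - ⟨ha, -⟩
    exact hsp a ha
  · intro v hv hvp huv
    refine huv.antisymm fun a hav => ⟨?_, hv.1 hav⟩
    by_contra ha
    have hax : R.one a = R.one x := hv.1 hav
    have h1 : R.one a ∈ u := hax ▸ hx
    have hca : R.compl a ∈ u :=
      hu.le_of_ge (adjoin_mem hu.prop h1 ha) (subset_adjoin u a) (compl_mem_adjoin hu.prop.1 a)
    have hcv : R.compl a ∈ v := huv ⟨hca, (R.one_compl a).trans hax⟩
    exact hvp a hax (hv.2.2.2 a _ hav hcv)

end RBA

/-- Any strongly proper filter `F` with `X ∉ F` extends to some `u ∈ F^RB` with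
`π₂(F) = π₂(u)` and `X ∉ u`. -/
theorem stmt9 {α : Type*} (R : RBA α) (F : Set α)
    (hF : R.IsFilter F) (hSP : R.StronglyProper F)
    (X : α) (hX : X ∉ F) :
    ∃ u ∈ R.FRB, F ⊆ u ∧ R.pi2 F = R.pi2 u ∧ X ∉ u := by
  have hadm : R.Adm F F := ⟨hF, hSP, fun _ h => h⟩
  obtain ⟨G, hG, hFG, hGX⟩ :
      ∃ G, R.Adm F G ∧ F ⊆ G ∧ (R.one X ∈ F → R.compl X ∈ G) := by
    by_cases h1 : R.one X ∈ F
    · exact ⟨R.adjoin F X, RBA.adjoin_mem hadm h1 hX, RBA.subset_adjoin F X,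
        fun _ => RBA.compl_mem_adjoin hF X⟩
    · exact ⟨F, hadm, subset_rfl, fun h => absurd h h1⟩
  obtain ⟨u, hGu, hu⟩ := RBA.exists_maximal hG
  refine ⟨u, RBA.maximal_mem_FRB hu, hFG.trans hGu, ?_, fun hXu => ?_⟩
  · ext z
    constructor
    · rintro ⟨hz, hx⟩
      exact ⟨hGu (hFG hz), hx⟩
    · rintro ⟨hz, x, rfl⟩
      exact ⟨hu.prop.2.2 x hz, x, rfl⟩
  · have h1 : R.one X ∈ F := hu.prop.2.2 X (hu.prop.1.2.1 _ _ hXu (R.ge_one X))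
    exact hu.prop.2.1 X (hu.prop.1.2.2 _ _ hXu (hGu (hGX h1)))
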